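/- Suppose β is a torsion potential for g on U. Then for all indices i, j, a, b one has Ω^G_{ij̄ WᵃW̄ᵇ} = −Σ_{m,n} g^{b̄m}·g^{n̄a}·( Ω^g_{ij̄mn̄} − Σ_{l,o} g^{l̄o}·T_{moj̄}·conj(T_{nlī}) ), where Ω^G_{ij̄ WᵃW̄ᵇ} denotes the lowered Chern curvature component of G in the slots (n+a, n+b). -/

import Mathlib

open Matrix
open scoped ComplexOrder

noncomputable section

/-- The generalized metric associated to a Hermitian metric `g` and a `(2,0)`-form
(antisymmetric matrix) `β`, as a `2n × 2n` block matrix on `T ⊕ T*`. -/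
def genMetric {n : ℕ} (g β : Matrix (Fin n) (Fin n) ℂ) :
    Matrix (Fin n ⊕ Fin n) (Fin n ⊕ Fin n) ℂ :=
  Matrix.fromBlocks (g + β * (g⁻¹).map (starRingEnd ℂ) * βᴴ) (β * (g⁻¹).map (starRingEnd ℂ))
    ((g⁻¹).map (starRingEnd ℂ) * βᴴ) ((g⁻¹).map (starRingEnd ℂ))

/-- The Wirtinger derivative `∂ᵢ f = ½(∂f/∂xᵢ − i·∂f/∂yᵢ)` of a function `f : ℂⁿ → ℂ`,
computed via the real Fréchet derivative. -/
def wd {n : ℕ} (i : Fin n) (f : (Fin n → ℂ) → ℂ) (z : Fin n → ℂ) : ℂ :=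
  (fderiv ℝ f z (Pi.single i 1) - Complex.I * fderiv ℝ f z (Pi.single i Complex.I)) / 2

/-- The conjugate Wirtinger derivative `∂_{ī} f = ½(∂f/∂xᵢ + i·∂f/∂yᵢ)`. -/
def wdb {n : ℕ} (i : Fin n) (f : (Fin n → ℂ) → ℂ) (z : Fin n → ℂ) : ℂ :=
  (fderiv ℝ f z (Pi.single i 1) + Complex.I * fderiv ℝ f z (Pi.single i Complex.I)) / 2

/-- Lowered Chern curvature `Ω^h_{ij̄αβ̄} = −∂ᵢ∂_{j̄}h_{αβ̄} + Σ ∂ᵢh_{αγ̄}·h^{γ̄δ}·∂_{j̄}h_{δβ̄}`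
of a Hermitian matrix field `h`, where `h^{γ̄δ} = (h⁻¹) γ δ`. -/
def chern {n : ℕ} {ι : Type*} [Fintype ι] [DecidableEq ι]
    (h : (Fin n → ℂ) → Matrix ι ι ℂ) (i j : Fin n) (a b : ι) (z : Fin n → ℂ) : ℂ :=
  - wd i (fun w => wdb j (fun v => h v a b) w) z
    + ∑ c : ι, ∑ d : ι, wd i (fun w => h w a c) z * (h z)⁻¹ c d * wdb j (fun w => h w d b) z

/-- Chern torsion `T_{ijk̄} = ∂ᵢ g_{jk̄} − ∂ⱼ g_{ik̄}`. -/
def torsion {n : ℕ} (g : (Fin n → ℂ) → Matrix (Fin n) (Fin n) ℂ)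
    (i j k : Fin n) (z : Fin n → ℂ) : ℂ :=
  wd i (fun w => g w j k) z - wd j (fun w => g w i k) z

/-- `β` is a torsion potential for `g` on `U`: `∂_{k̄} β_{ij} = T_{ijk̄}` on `U`. -/
def IsTorsionPotential {n : ℕ} (g β : (Fin n → ℂ) → Matrix (Fin n) (Fin n) ℂ)
    (U : Set (Fin n → ℂ)) : Prop :=
  ∀ z ∈ U, ∀ i j k : Fin n, wdb k (fun w => β w i j) z = torsion g i j k z

/-- Second Chern covariant derivative
`∇ᵢ∇_{j̄}β_{ab} = ∂ᵢ∂_{j̄}β_{ab} − Σ g^{k̄l}·∂ᵢg_{ak̄}·∂_{j̄}β_{lb} − Σ g^{k̄l}·∂ᵢg_{bk̄}·∂_{j̄}β_{al}`. -/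
def nabla2beta {n : ℕ} (g β : (Fin n → ℂ) → Matrix (Fin n) (Fin n) ℂ)
    (i j a b : Fin n) (z : Fin n → ℂ) : ℂ :=
  wd i (fun w => wdb j (fun v => β v a b) w) z
    - ∑ k : Fin n, ∑ l : Fin n, (g z)⁻¹ k l * wd i (fun w => g w a k) z * wdb j (fun w => β w l b) z
    - ∑ k : Fin n, ∑ l : Fin n, (g z)⁻¹ k l * wd i (fun w => g w b k) z * wdb j (fun w => β w a l) z

/-!
The corner of `G` spanned by the `Wᵃ` is `C = conj(g⁻¹) = (g⁻¹)ᵀ`, and `G` is congruent to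
`diag(g, C)` by unitriangular matrices built from `β` and `β*`. The curvature of this corner is
therefore that of `C` alone plus a Gauss-type term `C · ∂β* · g⁻¹ · ∂̄β · C`. The curvature of `C`,
the metric dual to `g`, is minus the transpose of that of `g` with both indices raised by `g⁻¹`.
Since `∂̄β` is the torsion of `g`, the Gauss-type term is the quadratic torsion correction.
-/

open Filter Topology

/-- The complex conjugate `u - i v` of a complex tangent vector `u + i v`. Vectors of `E ⊗ ℂ` are
encoded as pairs `(u, v)`. -/
def conjVector {E : Type*} [AddCommGroup E] (X : E × E) : E × E := (X.1, -X.2)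

section ComplexDerivative

variable {E : Type*} [NormedAddCommGroup E] [NormedSpace ℝ E]

/-- The derivative of `f` along a complex tangent vector; both kinds of Wirtinger derivatives are
special cases. -/
def complexDeriv (X : E × E) (f : E → ℂ) (z : E) : ℂ :=
  fderiv ℝ f z X.1 + Complex.I * fderiv ℝ f z X.2

variable {X : E × E} {f f' : E → ℂ} {z : E}

lemma complexDeriv_congr (h : f =ᶠ[𝓝 z] f') : complexDeriv X f z = complexDeriv X f' z := by
  simp only [complexDeriv, h.fderiv_eq]

lemma complexDeriv_const (c : ℂ) : complexDeriv X (fun _ ↦ c) z = 0 := by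
  simp [complexDeriv]

lemma complexDeriv_neg : complexDeriv X (fun w ↦ -f w) z = -complexDeriv X f z := by
  simp only [complexDeriv, fderiv_fun_neg, _root_.neg_apply]
  ring

lemma complexDeriv_mul (hf : DifferentiableAt ℝ f z) (hf' : DifferentiableAt ℝ f' z) :
    complexDeriv X (fun w ↦ f w * f' w) z =
      complexDeriv X f z * f' z + f z * complexDeriv X f' z := by
  simp only [complexDeriv, fderiv_fun_mul hf hf', _root_.add_apply, _root_.smul_apply,
    smul_eq_mul]
  ring

lemma complexDeriv_sum {ι : Type*} {s : Finset ι} {F : ι → E → ℂ}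
    (hF : ∀ k ∈ s, DifferentiableAt ℝ (F k) z) :
    complexDeriv X (fun w ↦ ∑ k ∈ s, F k w) z = ∑ k ∈ s, complexDeriv X (F k) z := by
  simp only [complexDeriv, fderiv_fun_sum hF, _root_.sum_apply, Finset.mul_sum,
    Finset.sum_add_distrib]

lemma complexDeriv_star :
    complexDeriv X (fun w ↦ star (f w)) z = star (complexDeriv (conjVector X) f z) := by
  have hstar : fderiv ℝ (fun w ↦ star (f w)) z =
      (Complex.conjCLE : ℂ →L[ℝ] ℂ).comp (fderiv ℝ f z) :=
    Complex.conjCLE.comp_fderiv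
  rw [complexDeriv, hstar]
  simp [complexDeriv, conjVector]

lemma differentiableAt_complexDeriv (hf : ContDiffAt ℝ 2 f z) :
    DifferentiableAt ℝ (complexDeriv X f) z := by
  have hfderiv : DifferentiableAt ℝ (fderiv ℝ f) z :=
    (hf.fderiv_right (m := 1) le_rfl).differentiableAt one_ne_zero
  unfold complexDeriv
  fun_prop

end ComplexDerivative

section MatrixDerivative

variable {E : Type*} [NormedAddCommGroup E] [NormedSpace ℝ E] {ι κ τ : Type*}

/-- Differentiability of a matrix field, stated entry by entry because `Matrix` carries no global
norm. -/
def EntrywiseDifferentiableAt (A : E → Matrix ι κ ℂ) (z : E) : Prop :=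
  ∀ a b, DifferentiableAt ℝ (fun w ↦ A w a b) z

/-- The entrywise derivative of a matrix field along a complex tangent vector. -/
def matrixDeriv (X : E × E) (A : E → Matrix ι κ ℂ) (z : E) : Matrix ι κ ℂ :=
  Matrix.of fun a b ↦ complexDeriv X (fun w ↦ A w a b) z

variable {X : E × E} {z : E}

lemma matrixDeriv_congr {A B : E → Matrix ι κ ℂ} (h : A =ᶠ[𝓝 z] B) :
    matrixDeriv X A z = matrixDeriv X B z := by
  ext a b
  exact complexDeriv_congr (h.mono fun w hw ↦ by simp only [hw])

lemma matrixDeriv_eventuallyEq {A B : E → Matrix ι κ ℂ} (h : A =ᶠ[𝓝 z] B) :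
    matrixDeriv X A =ᶠ[𝓝 z] matrixDeriv X B :=
  h.eventuallyEq_nhds.mono fun _ ↦ matrixDeriv_congr

lemma matrixDeriv_const (A : Matrix ι κ ℂ) : matrixDeriv X (fun _ ↦ A) z = 0 := by
  ext a b
  exact complexDeriv_const (A a b)

lemma matrixDeriv_neg {A : E → Matrix ι κ ℂ} :
    matrixDeriv X (fun w ↦ -A w) z = -matrixDeriv X A z := by
  ext a b
  exact complexDeriv_neg

lemma matrixDeriv_transpose {A : E → Matrix ι κ ℂ} :
    matrixDeriv X (fun w ↦ (A w)ᵀ) z = (matrixDeriv X A z)ᵀ := rfl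

lemma matrixDeriv_conjTranspose {A : E → Matrix ι κ ℂ} :
    matrixDeriv X (fun w ↦ (A w)ᴴ) z = (matrixDeriv (conjVector X) A z)ᴴ := by
  ext a b
  exact complexDeriv_star

lemma matrixDeriv_fromBlocks {ι' κ' : Type*} {A : E → Matrix ι κ ℂ} {B : E → Matrix ι κ' ℂ}
    {C : E → Matrix ι' κ ℂ} {D : E → Matrix ι' κ' ℂ} :
    matrixDeriv X (fun w ↦ fromBlocks (A w) (B w) (C w) (D w)) =
      fun w ↦ fromBlocks (matrixDeriv X A w) (matrixDeriv X B w) (matrixDeriv X C w)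
        (matrixDeriv X D w) := by
  ext w (a | a) (b | b) <;> rfl

lemma EntrywiseDifferentiableAt.mul [Fintype κ] {A : E → Matrix ι κ ℂ} {B : E → Matrix κ τ ℂ}
    (hA : EntrywiseDifferentiableAt A z) (hB : EntrywiseDifferentiableAt B z) :
    EntrywiseDifferentiableAt (fun w ↦ A w * B w) z := by
  intro a b
  simp only [mul_apply]
  exact .fun_sum fun k _ ↦ (hA a k).mul (hB k b)

lemma EntrywiseDifferentiableAt.conjTranspose {A : E → Matrix ι κ ℂ}
    (hA : EntrywiseDifferentiableAt A z) : EntrywiseDifferentiableAt (fun w ↦ (A w)ᴴ) z :=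
  fun a b ↦ (hA b a).star

lemma matrixDeriv_mul [Fintype κ] {A : E → Matrix ι κ ℂ} {B : E → Matrix κ τ ℂ}
    (hA : EntrywiseDifferentiableAt A z) (hB : EntrywiseDifferentiableAt B z) :
    matrixDeriv X (fun w ↦ A w * B w) z = matrixDeriv X A z * B z + A z * matrixDeriv X B z := by
  ext a b
  simp only [matrixDeriv, of_apply, mul_apply, Matrix.add_apply]
  rw [complexDeriv_sum (F := fun k w ↦ A w a k * B w k b) fun k _ ↦ (hA a k).mul (hB k b),
    ← Finset.sum_add_distrib]
  exact Finset.sum_congr rfl fun k _ ↦ complexDeriv_mul (hA a k) (hB k b)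

lemma eventually_entrywiseDifferentiableAt [Finite ι] [Finite κ] {A : E → Matrix ι κ ℂ}
    (hA : ∀ a b, ContDiffAt ℝ 2 (fun w ↦ A w a b) z) :
    ∀ᶠ w in 𝓝 z, EntrywiseDifferentiableAt A w :=
  eventually_all.2 fun a ↦ eventually_all.2 fun b ↦
    ((hA a b).eventually (by simp)).mono fun _ hw ↦ hw.differentiableAt two_ne_zero

lemma entrywiseDifferentiableAt_matrixDeriv {A : E → Matrix ι κ ℂ}
    (hA : ∀ a b, ContDiffAt ℝ 2 (fun w ↦ A w a b) z) :
    EntrywiseDifferentiableAt (matrixDeriv X A) z :=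
  fun a b ↦ differentiableAt_complexDeriv (hA a b)

section Inverse

variable [Fintype ι] [DecidableEq ι] {A : E → Matrix ι ι ℂ}

lemma EntrywiseDifferentiableAt.det (hA : EntrywiseDifferentiableAt A z) :
    DifferentiableAt ℝ (fun w ↦ (A w).det) z := by
  simp only [det_apply]
  exact .fun_sum fun σ _ ↦ .const_smul
    (HasFDerivAt.finsetProd fun k _ ↦ (hA (σ k) k).hasFDerivAt).differentiableAt _

lemma EntrywiseDifferentiableAt.adjugate (hA : EntrywiseDifferentiableAt A z) :
    EntrywiseDifferentiableAt (fun w ↦ (A w).adjugate) z := by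
  intro a b
  simp only [adjugate_apply]
  refine det fun p q ↦ ?_
  by_cases hp : p = b
  · simp only [hp, updateRow_self, differentiableAt_const]
  · simpa only [updateRow_ne hp] using hA p q

lemma EntrywiseDifferentiableAt.inv (hA : EntrywiseDifferentiableAt A z) (hz : IsUnit (A z).det) :
    EntrywiseDifferentiableAt (fun w ↦ (A w)⁻¹) z := by
  intro a b
  simp only [inv_def, Ring.inverse_eq_inv', Matrix.smul_apply, smul_eq_mul]
  exact (hA.det.inv hz.ne_zero).mul (hA.adjugate a b)

lemma EntrywiseDifferentiableAt.eventually_isUnit_det (hA : EntrywiseDifferentiableAt A z)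
    (hz : IsUnit (A z).det) : ∀ᶠ w in 𝓝 z, IsUnit (A w).det :=
  (hA.det.continuousAt.eventually_ne hz.ne_zero).mono fun _ hw ↦ hw.isUnit

lemma matrixDeriv_inv (hA : EntrywiseDifferentiableAt A z) (hz : IsUnit (A z).det) :
    matrixDeriv X (fun w ↦ (A w)⁻¹) z = -((A z)⁻¹ * matrixDeriv X A z * (A z)⁻¹) := by
  have hleibniz : matrixDeriv X A z * (A z)⁻¹ + A z * matrixDeriv X (fun w ↦ (A w)⁻¹) z = 0 := by
    rw [← matrixDeriv_mul hA (hA.inv hz), ← matrixDeriv_const (X := X) (z := z) (1 : Matrix ι ι ℂ)]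
    exact matrixDeriv_congr ((hA.eventually_isUnit_det hz).mono fun w hw ↦ mul_nonsing_inv _ hw)
  rw [← nonsing_inv_mul_cancel_left _ (matrixDeriv X (fun w ↦ (A w)⁻¹) z) hz,
    eq_neg_of_add_eq_zero_right hleibniz, mul_neg, mul_assoc]

lemma matrixDeriv_matrixDeriv_inv {Y : E × E}
    (hA : ∀ a b, ContDiffAt ℝ 2 (fun w ↦ A w a b) z) (hz : IsUnit (A z).det) :
    matrixDeriv X (matrixDeriv Y fun w ↦ (A w)⁻¹) z =
      (A z)⁻¹ * matrixDeriv X A z * (A z)⁻¹ * matrixDeriv Y A z * (A z)⁻¹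
        - (A z)⁻¹ * matrixDeriv X (matrixDeriv Y A) z * (A z)⁻¹
        + (A z)⁻¹ * matrixDeriv Y A z * (A z)⁻¹ * matrixDeriv X A z * (A z)⁻¹ := by
  have hdiff := eventually_entrywiseDifferentiableAt hA
  have hinv := hdiff.self_of_nhds.inv hz
  have hderiv := entrywiseDifferentiableAt_matrixDeriv (X := Y) hA
  have hfirst : (matrixDeriv Y fun w ↦ (A w)⁻¹) =ᶠ[𝓝 z]
      fun w ↦ -((A w)⁻¹ * matrixDeriv Y A w * (A w)⁻¹) := by
    filter_upwards [hdiff, hdiff.self_of_nhds.eventually_isUnit_det hz] with w hw hunit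
    exact matrixDeriv_inv hw hunit
  rw [matrixDeriv_congr hfirst, matrixDeriv_neg, matrixDeriv_mul (hinv.mul hderiv) hinv,
    matrixDeriv_mul hinv hderiv, matrixDeriv_inv hdiff.self_of_nhds hz]
  noncomm_ring

end Inverse

end MatrixDerivative

section ChernCurvature

variable {E : Type*} [NormedAddCommGroup E] [NormedSpace ℝ E]
  {ι κ : Type*} [Fintype ι] [DecidableEq ι] [Fintype κ] [DecidableEq κ]

/-- The lowered Chern curvature `-∂_X ∂_Y h + ∂_X h · h⁻¹ · ∂_Y h` of a matrix field `h`, as a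
matrix, for arbitrary complex tangent vectors `X` and `Y` in place of `∂ᵢ` and `∂_{j̄}`. -/
def chernCurvature (X Y : E × E) (h : E → Matrix ι ι ℂ) (z : E) : Matrix ι ι ℂ :=
  -matrixDeriv X (matrixDeriv Y h) z + matrixDeriv X h z * (h z)⁻¹ * matrixDeriv Y h z

variable {X Y : E × E} {z : E}

lemma chernCurvature_congr {h h' : E → Matrix ι ι ℂ} (hh : h =ᶠ[𝓝 z] h') :
    chernCurvature X Y h z = chernCurvature X Y h' z := by
  simp only [chernCurvature, matrixDeriv_congr hh, hh.eq_of_nhds,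
    matrixDeriv_congr (matrixDeriv_eventuallyEq hh)]

lemma chernCurvature_inv_transpose {h : E → Matrix ι ι ℂ}
    (hh : ∀ a b, ContDiffAt ℝ 2 (fun w ↦ h w a b) z) (hz : IsUnit (h z).det) :
    chernCurvature X Y (fun w ↦ ((h w)⁻¹)ᵀ) z =
      -((h z)⁻¹ * chernCurvature X Y h z * (h z)⁻¹)ᵀ := by
  have hdiff := (eventually_entrywiseDifferentiableAt hh).self_of_nhds
  have hsecond : matrixDeriv X (matrixDeriv Y fun w ↦ ((h w)⁻¹)ᵀ) z =
      (matrixDeriv X (matrixDeriv Y fun w ↦ (h w)⁻¹) z)ᵀ := rfl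
  rw [chernCurvature, hsecond, matrixDeriv_transpose, matrixDeriv_transpose,
    ← transpose_nonsing_inv, nonsing_inv_nonsing_inv _ hz, ← transpose_mul, ← transpose_mul,
    ← transpose_neg, ← transpose_add, ← transpose_neg, matrixDeriv_matrixDeriv_inv hh hz,
    matrixDeriv_inv hdiff hz, matrixDeriv_inv hdiff hz, chernCurvature]
  congr 1
  simp only [mul_neg, neg_mul, neg_neg, mul_add, add_mul, mul_assoc,
    mul_nonsing_inv_cancel_left _ _ hz]
  abel

/-- The block matrix `[[1, β], [0, 1]] · diag(g, C) · [[1, 0], [γ, 1]]`, which is the generalized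
metric when `C = conj(g⁻¹)` and `γ = β*`. -/
def shearedBlocks {ι κ : Type*} [Fintype κ] (g : Matrix ι ι ℂ) (C : Matrix κ κ ℂ)
    (β : Matrix ι κ ℂ) (γ : Matrix κ ι ℂ) : Matrix (ι ⊕ κ) (ι ⊕ κ) ℂ :=
  fromBlocks (g + β * C * γ) (β * C) (C * γ) C

lemma inv_shearedBlocks {g : Matrix ι ι ℂ} {C : Matrix κ κ ℂ} (hg : IsUnit g.det)
    (hC : IsUnit C.det) (β : Matrix ι κ ℂ) (γ : Matrix κ ι ℂ) :
    (shearedBlocks g C β γ)⁻¹ =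
      fromBlocks g⁻¹ (-(g⁻¹ * β)) (-(γ * g⁻¹)) (γ * g⁻¹ * β + C⁻¹) := by
  refine inv_eq_left_inv ?_
  rw [shearedBlocks, fromBlocks_multiply, ← fromBlocks_one]
  congr 1
  · simp [Matrix.mul_add, Matrix.mul_assoc, nonsing_inv_mul _ hg]
  · simp [Matrix.mul_assoc]
  · simp [Matrix.mul_add, Matrix.add_mul, Matrix.mul_assoc, nonsing_inv_mul _ hg,
      nonsing_inv_mul_cancel_left _ _ hC]
  · simp [Matrix.add_mul, Matrix.mul_assoc, nonsing_inv_mul _ hC]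

lemma toBlocks₂₂_chernCurvature_shearedBlocks {g : E → Matrix ι ι ℂ} {C : E → Matrix κ κ ℂ}
    {β : E → Matrix ι κ ℂ} {γ : E → Matrix κ ι ℂ}
    (hg : IsUnit (g z).det) (hC : IsUnit (C z).det) (hCd : EntrywiseDifferentiableAt C z)
    (hβ : EntrywiseDifferentiableAt β z) (hγ : EntrywiseDifferentiableAt γ z) :
    (chernCurvature X Y (fun w ↦ shearedBlocks (g w) (C w) (β w) (γ w)) z).toBlocks₂₂ =
      chernCurvature X Y C z +
        C z * matrixDeriv X γ z * (g z)⁻¹ * matrixDeriv Y β z * C z := by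
  simp only [chernCurvature, inv_shearedBlocks hg hC]
  simp only [shearedBlocks, matrixDeriv_fromBlocks, fromBlocks_multiply, fromBlocks_neg,
    fromBlocks_add, toBlocks_fromBlocks₂₂, matrixDeriv_mul hCd hγ, matrixDeriv_mul hβ hCd]
  simp only [Matrix.mul_add, Matrix.add_mul, Matrix.mul_neg, Matrix.neg_mul, Matrix.mul_assoc]
  -- Every term containing an undifferentiated `β` or `γ` cancels.
  abel

end ChernCurvature

section Wirtinger

variable {n : ℕ}

/-- The complex tangent vector `½(∂/∂xᵢ - i ∂/∂yᵢ)` whose derivative is `wd i`. -/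
def wirtingerVector (i : Fin n) : (Fin n → ℂ) × (Fin n → ℂ) :=
  ((2⁻¹ : ℝ) • Pi.single i 1, -((2⁻¹ : ℝ) • Pi.single i Complex.I))

lemma wd_eq_complexDeriv (i : Fin n) : wd i = complexDeriv (wirtingerVector i) := by
  ext f z
  simp only [wd, complexDeriv, wirtingerVector, map_smul, map_neg, Complex.real_smul]
  push_cast
  ring

lemma wdb_eq_complexDeriv (i : Fin n) : wdb i = complexDeriv (conjVector (wirtingerVector i)) := by
  ext f z
  simp only [wdb, complexDeriv, conjVector, wirtingerVector, map_smul, neg_neg, Complex.real_smul]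
  push_cast
  ring

lemma chern_eq_chernCurvature {ι : Type*} [Fintype ι] [DecidableEq ι]
    (h : (Fin n → ℂ) → Matrix ι ι ℂ) (i j : Fin n) (a b : ι) (z : Fin n → ℂ) :
    chern h i j a b z =
      chernCurvature (wirtingerVector i) (conjVector (wirtingerVector j)) h z a b := by
  simp only [chern, chernCurvature, wd_eq_complexDeriv, wdb_eq_complexDeriv, Matrix.add_apply,
    Matrix.neg_apply, mul_apply, Finset.sum_mul]
  exact congrArg _ Finset.sum_comm

lemma torsion_swap (g : (Fin n → ℂ) → Matrix (Fin n) (Fin n) ℂ) (i j k : Fin n) (z : Fin n → ℂ) :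
    torsion g i j k z = -torsion g j i k z :=
  (neg_sub _ _).symm

end Wirtinger

section GeneralizedMetric

variable {n : ℕ}

lemma genMetric_eq_shearedBlocks {g : Matrix (Fin n) (Fin n) ℂ} (hg : g.IsHermitian)
    (β : Matrix (Fin n) (Fin n) ℂ) : genMetric g β = shearedBlocks g (g⁻¹)ᵀ β βᴴ := by
  have hconj : (g⁻¹).map (starRingEnd ℂ) = (g⁻¹)ᵀ := congrArg transpose hg.inv.eq
  rw [genMetric, hconj, shearedBlocks]

/-- The quadratic correction `(∂_Y β)ᵀ · (g⁻¹)ᵀ · conj(∂_{X̄} β)` to the curvature of `g`, which is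
quadratic in the torsion when `β` is a torsion potential. -/
def gaussTerm {E : Type*} [NormedAddCommGroup E] [NormedSpace ℝ E] (X Y : E × E)
    (g β : E → Matrix (Fin n) (Fin n) ℂ) (z : E) : Matrix (Fin n) (Fin n) ℂ :=
  (matrixDeriv Y β z)ᵀ * ((g z)⁻¹)ᵀ * (matrixDeriv (conjVector X) β z).map star

lemma toBlocks₂₂_chernCurvature_genMetric {E : Type*} [NormedAddCommGroup E] [NormedSpace ℝ E]
    {X Y : E × E} {z : E} {g β : E → Matrix (Fin n) (Fin n) ℂ}
    (hherm : ∀ᶠ w in 𝓝 z, (g w).IsHermitian) (hunit : IsUnit (g z).det)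
    (hg : ∀ a b, ContDiffAt ℝ 2 (fun w ↦ g w a b) z) (hβ : EntrywiseDifferentiableAt β z) :
    (chernCurvature X Y (fun w ↦ genMetric (g w) (β w)) z).toBlocks₂₂ =
      -((g z)⁻¹ * (chernCurvature X Y g z - gaussTerm X Y g β z) * (g z)⁻¹)ᵀ := by
  have hinv := (eventually_entrywiseDifferentiableAt hg).self_of_nhds.inv hunit
  have hinvT : EntrywiseDifferentiableAt (fun w ↦ ((g w)⁻¹)ᵀ) z := fun a b ↦ hinv b a
  have hunitT : IsUnit ((g z)⁻¹)ᵀ.det := by simpa using hunit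
  rw [chernCurvature_congr (hherm.mono fun w hw ↦ genMetric_eq_shearedBlocks hw (β w)),
    toBlocks₂₂_chernCurvature_shearedBlocks hunit hunitT hinvT hβ hβ.conjTranspose,
    chernCurvature_inv_transpose hg hunit, matrixDeriv_conjTranspose]
  simp only [gaussTerm, conjTranspose, transpose_mul, transpose_sub, transpose_transpose,
    transpose_map, Matrix.mul_sub, Matrix.sub_mul, Matrix.mul_assoc, neg_sub, neg_add_eq_sub]

variable {g β : (Fin n → ℂ) → Matrix (Fin n) (Fin n) ℂ} {z : Fin n → ℂ}

lemma IsTorsionPotential.gaussTerm_apply (hpot : IsTorsionPotential g β {z}) (i j m p : Fin n) :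
    gaussTerm (wirtingerVector i) (conjVector (wirtingerVector j)) g β z m p =
      ∑ l, ∑ o, (g z)⁻¹ l o * torsion g m o j z * starRingEnd ℂ (torsion g p l i z) := by
  have hderiv (k q r : Fin n) :
      matrixDeriv (conjVector (wirtingerVector k)) β z q r = -torsion g r q k z := by
    rw [← torsion_swap, ← hpot z rfl, wdb_eq_complexDeriv]
    rfl
  simp only [gaussTerm, mul_apply, transpose_apply, map_apply, hderiv, Finset.sum_mul]
  refine Finset.sum_congr rfl fun l _ ↦ Finset.sum_congr rfl fun o _ ↦ ?_
  simp only [star_neg, starRingEnd_apply]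
  ring

theorem chern_genMetric_WW_general (hherm : ∀ᶠ w in 𝓝 z, (g w).IsHermitian)
    (hunit : IsUnit (g z).det) (hg : ∀ a b, ContDiffAt ℝ 2 (fun w ↦ g w a b) z)
    (hβ : EntrywiseDifferentiableAt β z) (hpot : IsTorsionPotential g β {z}) (i j a b : Fin n) :
    chern (fun w ↦ genMetric (g w) (β w)) i j (Sum.inr a) (Sum.inr b) z =
      -∑ m, ∑ p, (g z)⁻¹ b m * (g z)⁻¹ p a *
        (chern g i j m p z -
          ∑ l, ∑ o, (g z)⁻¹ l o * torsion g m o j z * starRingEnd ℂ (torsion g p l i z)) := by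
  set X := wirtingerVector i
  set Y := conjVector (wirtingerVector j)
  calc
    _ = (chernCurvature X Y (fun w ↦ genMetric (g w) (β w)) z).toBlocks₂₂ a b :=
      chern_eq_chernCurvature ..
    _ = -((g z)⁻¹ * (chernCurvature X Y g z - gaussTerm X Y g β z) * (g z)⁻¹) b a := by
      rw [toBlocks₂₂_chernCurvature_genMetric hherm hunit hg hβ, Matrix.neg_apply, transpose_apply]
    _ = -∑ m, ∑ p, (g z)⁻¹ b m * (g z)⁻¹ p a *
        (chernCurvature X Y g z m p - gaussTerm X Y g β z m p) := by
      simp only [mul_apply, Matrix.sub_apply, Finset.sum_mul]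
      rw [Finset.sum_comm]
      simp only [mul_right_comm]
    _ = _ := by simp only [X, Y, chern_eq_chernCurvature, hpot.gaussTerm_apply]

end GeneralizedMetric

/-- curvature of the generalized metric, `W W̄` block:
`Ω^G_{ij̄ WᵃW̄ᵇ} = −Σ g^{b̄m}·g^{n̄a}·(Ω^g_{ij̄mn̄} − Σ g^{l̄o}·T_{moj̄}·conj(T_{nlī}))`. -/
theorem chern_genMetric_WW {n : ℕ} (hn : 0 < n) (U : Set (Fin n → ℂ)) (hU : IsOpen U)
    (g β : (Fin n → ℂ) → Matrix (Fin n) (Fin n) ℂ)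
    (hg : ∀ z ∈ U, (g z).PosDef)
    (hβ : ∀ z ∈ U, (β z)ᵀ = -(β z))
    (hgC2 : ∀ a b : Fin n, ContDiffOn ℝ 2 (fun z => g z a b) U)
    (hβC2 : ∀ a b : Fin n, ContDiffOn ℝ 2 (fun z => β z a b) U)
    (hpot : IsTorsionPotential g β U) :
    ∀ z ∈ U, ∀ i j a b : Fin n,
      chern (fun w => genMetric (g w) (β w)) i j (Sum.inr a) (Sum.inr b) z =
        - ∑ m : Fin n, ∑ p : Fin n, (g z)⁻¹ b m * (g z)⁻¹ p a *
            (chern g i j m p z -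
              ∑ l : Fin n, ∑ o : Fin n,
                (g z)⁻¹ l o * torsion g m o j z * (starRingEnd ℂ) (torsion g p l i z)) := by
  intro z hz i j a b
  have hnhds := hU.mem_nhds hz
  exact chern_genMetric_WW_general (mem_of_superset hnhds fun w hw ↦ (hg w hw).isHermitian)
    (hg z hz).det_pos.ne'.isUnit (fun a b ↦ (hgC2 a b).contDiffAt hnhds)
    (fun a b ↦ ((hβC2 a b).contDiffAt hnhds).differentiableAt two_ne_zero)
    (fun w hw ↦ hpot w (hw ▸ hz)) i j a b
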